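/- arXiv:1802.04464 — 2 statements merged into one kernel-verified Lean document; each statement's English description precedes it below -/
import Mathlib

section
/- Let d be a positive integer, let p, r ∈ (0,∞] satisfy r ≤ min(1,p), and let a, b : ℤ^d → ℂ with ‖a‖_{ℓ^p(ℤ^d)} < ∞ and ‖b‖_{ℓ^r(ℤ^d)} < ∞. Then for every x ∈ ℤ^d the series (a*b)(x) = Σ_{j∈ℤ^d} a(x−j)·b(j) converges absolutely, and ‖a*b‖_{ℓ^p(ℤ^d)} ≤ ‖a‖_{ℓ^p(ℤ^d)}·‖b‖_{ℓ^r(ℤ^d)}. -/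
open MeasureTheory ENNReal

/-!
Since `r ≤ 1`, the map `t ↦ t ^ r` is subadditive, so `|a * b| ^ r ≤ |a| ^ r * |b| ^ r` pointwise.
As `1 ≤ p / r`, the classical inequality `‖f * g‖_q ≤ ‖f‖_q ‖g‖_1` with `q = p / r` applies to
`f = |a| ^ r` and `g = |b| ^ r`; taking `r`-th roots gives the claim for all `p ≥ r` at once.
-/

section Series

variable {ι : Type*}

lemma rpow_sum_le_sum_rpow (s : Finset ι) (f : ι → ℝ≥0∞) {r : ℝ} (hr : 0 < r) (hr1 : r ≤ 1) :
    (∑ i ∈ s, f i) ^ r ≤ ∑ i ∈ s, f i ^ r :=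
  Finset.le_sum_of_subadditive (· ^ r) (ENNReal.zero_rpow_of_pos hr).le
    (fun x y => ENNReal.rpow_add_le_add_rpow x y hr.le hr1) s f

lemma rpow_tsum_le_tsum_rpow (f : ι → ℝ≥0∞) {r : ℝ} (hr : 0 < r) (hr1 : r ≤ 1) :
    (∑' i, f i) ^ r ≤ ∑' i, f i ^ r := by
  rw [← ENNReal.le_rpow_inv_iff hr]
  refine ENNReal.summable.tsum_le_of_sum_le fun s => ?_
  rw [ENNReal.le_rpow_inv_iff hr]
  exact (rpow_sum_le_sum_rpow s f hr hr1).trans (ENNReal.sum_le_tsum s)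

lemma tsum_mul_le_weight_mul_Lp (w f : ι → ℝ≥0∞) {p : ℝ} (hp : 1 ≤ p) :
    ∑' i, w i * f i ≤ (∑' i, w i) ^ (1 - p⁻¹) * (∑' i, w i * f i ^ p) ^ p⁻¹ := by
  have hp_inv : 0 ≤ 1 - p⁻¹ := sub_nonneg.2 (inv_le_one_of_one_le₀ hp)
  refine ENNReal.summable.tsum_le_of_sum_le fun s => ?_
  calc ∑ i ∈ s, w i * f i
      ≤ (∑ i ∈ s, w i) ^ (1 - p⁻¹) * (∑ i ∈ s, w i * f i ^ p) ^ p⁻¹ :=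
        ENNReal.inner_le_weight_mul_Lp_of_nonneg s hp w f
    _ ≤ (∑' i, w i) ^ (1 - p⁻¹) * (∑' i, w i * f i ^ p) ^ p⁻¹ := by
        gcongr
        · exact ENNReal.sum_le_tsum s
        · exact ENNReal.sum_le_tsum s

lemma rpow_tsum_mul_le_weight_mul_tsum (w f : ι → ℝ≥0∞) {p : ℝ} (hp : 1 ≤ p) :
    (∑' i, w i * f i) ^ p ≤ (∑' i, w i) ^ (p - 1) * ∑' i, w i * f i ^ p := by
  have hp0 : 0 < p := by positivity
  calc (∑' i, w i * f i) ^ p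
      ≤ ((∑' i, w i) ^ (1 - p⁻¹) * (∑' i, w i * f i ^ p) ^ p⁻¹) ^ p := by
        gcongr
        exact tsum_mul_le_weight_mul_Lp w f hp
    _ = (∑' i, w i) ^ (p - 1) * ∑' i, w i * f i ^ p := by
        rw [ENNReal.mul_rpow_of_nonneg _ _ hp0.le, ENNReal.rpow_inv_rpow hp0.ne',
          ← ENNReal.rpow_mul, sub_mul, one_mul, inv_mul_cancel₀ hp0.ne']

end Series

lemma eLpNorm_rpow_toReal_div {α : Type*} [MeasurableSpace α] {μ : Measure α} (f : α → ℝ≥0∞)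
    (p : ℝ≥0∞) {r : ℝ≥0∞} (hr : r ≠ 0) (hr_top : r ≠ ∞) :
    eLpNorm (fun x => f x ^ r.toReal) (p / r) μ = eLpNorm f p μ ^ r.toReal := by
  have h := eLpNorm_enorm_rpow (p := p / r) (μ := μ) f (ENNReal.toReal_pos hr hr_top)
  rwa [ENNReal.ofReal_toReal hr_top, ENNReal.div_mul_cancel hr hr_top] at h

lemma enorm_mul_le_enorm_mul_enorm {R : Type*} [NonUnitalSeminormedRing R] (x y : R) :
    ‖x * y‖ₑ ≤ ‖x‖ₑ * ‖y‖ₑ := by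
  simpa only [enorm_eq_nnnorm, ← ENNReal.coe_mul, ENNReal.coe_le_coe] using nnnorm_mul_le x y

section Convolution

variable {G : Type*} [AddGroup G]

lemma tsum_tsum_sub_mul (f g : G → ℝ≥0∞) :
    ∑' x, ∑' j, f (x - j) * g j = (∑' x, f x) * ∑' j, g j := by
  have translate (j : G) : ∑' x, f (x - j) = ∑' x, f x := (Equiv.subRight j).tsum_eq f
  rw [ENNReal.tsum_comm, ← ENNReal.tsum_mul_left]
  simp only [ENNReal.tsum_mul_right, translate]

lemma tsum_rpow_tsum_sub_mul_le (f g : G → ℝ≥0∞) {p : ℝ} (hp : 1 ≤ p) :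
    ∑' x, (∑' j, f (x - j) * g j) ^ p ≤ (∑' x, f x ^ p) * (∑' j, g j) ^ p := by
  calc ∑' x, (∑' j, f (x - j) * g j) ^ p
      ≤ ∑' x, (∑' j, g j) ^ (p - 1) * ∑' j, f (x - j) ^ p * g j := by
        refine ENNReal.tsum_le_tsum fun x => ?_
        simpa only [mul_comm (g _)] using
          rpow_tsum_mul_le_weight_mul_tsum g (fun j => f (x - j)) hp
    _ = (∑' x, f x ^ p) * ((∑' j, g j) ^ (p - 1) * (∑' j, g j) ^ (1 : ℝ)) := by
        rw [ENNReal.tsum_mul_left, tsum_tsum_sub_mul (fun x => f x ^ p), ENNReal.rpow_one,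
          mul_left_comm]
    _ = (∑' x, f x ^ p) * (∑' j, g j) ^ p := by
        rw [← ENNReal.rpow_add_of_nonneg _ _ (sub_nonneg.2 hp) zero_le_one, sub_add_cancel]

lemma tsum_sub_mul_le_iSup_mul_tsum (f g : G → ℝ≥0∞) (x : G) :
    ∑' j, f (x - j) * g j ≤ (⨆ y, f y) * ∑' j, g j := by
  rw [← ENNReal.tsum_mul_left]
  gcongr with j
  exact le_iSup f (x - j)

variable [MeasurableSpace G] [MeasurableSingletonClass G]

lemma eLpNorm_count_tsum_sub_mul_le_of_one_le (f g : G → ℝ≥0∞) {p : ℝ≥0∞} (hp : 1 ≤ p) :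
    eLpNorm (fun x => ∑' j, f (x - j) * g j) p .count
      ≤ eLpNorm f p .count * eLpNorm g 1 .count := by
  rw [eLpNorm_one_eq_lintegral_enorm, lintegral_count]
  rcases eq_or_ne p ∞ with rfl | hp_top
  · simpa only [eLpNorm_exponent_top, eLpNormEssSup_count, enorm_eq_self] using
      iSup_le (tsum_sub_mul_le_iSup_mul_tsum f g)
  · have hp0 : p ≠ 0 := (zero_lt_one.trans_le hp).ne'
    have hp_pos : 0 < p.toReal := ENNReal.toReal_pos hp0 hp_top
    have hp_one : 1 ≤ p.toReal := by simpa using ENNReal.toReal_mono hp_top hp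
    simp only [eLpNorm_eq_lintegral_rpow_enorm_toReal hp0 hp_top, lintegral_count, enorm_eq_self,
      one_div]
    rw [ENNReal.rpow_inv_le_iff hp_pos, ENNReal.mul_rpow_of_nonneg _ _ hp_pos.le,
      ENNReal.rpow_inv_rpow hp_pos.ne']
    exact tsum_rpow_tsum_sub_mul_le f g hp_one

lemma eLpNorm_count_tsum_sub_mul_le (f g : G → ℝ≥0∞) {p r : ℝ≥0∞} (hr : 0 < r) (hr1 : r ≤ 1)
    (hrp : r ≤ p) :
    eLpNorm (fun x => ∑' j, f (x - j) * g j) p .count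
      ≤ eLpNorm f p .count * eLpNorm g r .count := by
  have hr_top : r ≠ ∞ := (hr1.trans_lt ENNReal.one_lt_top).ne
  have hr_pos : 0 < r.toReal := ENNReal.toReal_pos hr.ne' hr_top
  have hr_one : r.toReal ≤ 1 := by simpa using ENNReal.toReal_mono ENNReal.one_ne_top hr1
  have one_le_div : 1 ≤ p / r := by
    rwa [ENNReal.le_div_iff_mul_le (.inl hr.ne') (.inl hr_top), one_mul]
  rw [← ENNReal.rpow_le_rpow_iff hr_pos, ENNReal.mul_rpow_of_nonneg _ _ hr_pos.le]
  calc eLpNorm (fun x => ∑' j, f (x - j) * g j) p .count ^ r.toReal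
      = eLpNorm (fun x => (∑' j, f (x - j) * g j) ^ r.toReal) (p / r) .count :=
        (eLpNorm_rpow_toReal_div _ p hr.ne' hr_top).symm
    _ ≤ eLpNorm (fun x => ∑' j, f (x - j) ^ r.toReal * g j ^ r.toReal) (p / r) .count := by
        refine eLpNorm_mono_enorm fun x => ?_
        simpa only [enorm_eq_self, ENNReal.mul_rpow_of_nonneg _ _ hr_pos.le] using
          rpow_tsum_le_tsum_rpow (fun j => f (x - j) * g j) hr_pos hr_one
    _ ≤ eLpNorm (fun x => f x ^ r.toReal) (p / r) .count
          * eLpNorm (fun j => g j ^ r.toReal) 1 .count :=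
        eLpNorm_count_tsum_sub_mul_le_of_one_le (fun x => f x ^ r.toReal)
          (fun j => g j ^ r.toReal) one_le_div
    _ = eLpNorm f p .count ^ r.toReal * eLpNorm g r .count ^ r.toReal := by
        rw [← ENNReal.div_self hr.ne' hr_top, eLpNorm_rpow_toReal_div f p hr.ne' hr_top,
          eLpNorm_rpow_toReal_div g r hr.ne' hr_top]

variable {p r : ℝ≥0∞}

lemma eLpNorm_count_tsum_enorm_sub_mul_enorm_le {E F : Type*} [ENorm E] [ENorm F] (a : G → E)
    (b : G → F) (hr : 0 < r) (hr1 : r ≤ 1) (hrp : r ≤ p) :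
    eLpNorm (fun x => ∑' j, ‖a (x - j)‖ₑ * ‖b j‖ₑ) p .count
      ≤ eLpNorm a p .count * eLpNorm b r .count := by
  simpa only [eLpNorm_enorm] using
    eLpNorm_count_tsum_sub_mul_le (fun x => ‖a x‖ₑ) (fun j => ‖b j‖ₑ) hr hr1 hrp

lemma summable_norm_sub_mul {R : Type*} [NonUnitalSeminormedRing R] {a b : G → R}
    (hr : 0 < r) (hr1 : r ≤ 1) (hrp : r ≤ p) (ha : eLpNorm a p .count < ∞)
    (hb : eLpNorm b r .count < ∞) (x : G) :
    Summable fun j => ‖a (x - j) * b j‖ := by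
  rw [← tsum_enorm_ne_top_iff_summable_norm, ← lt_top_iff_ne_top]
  calc ∑' j, ‖a (x - j) * b j‖ₑ
      ≤ ∑' j, ‖a (x - j)‖ₑ * ‖b j‖ₑ :=
        ENNReal.tsum_le_tsum fun j => enorm_mul_le_enorm_mul_enorm _ _
    _ ≤ eLpNorm (fun x => ∑' j, ‖a (x - j)‖ₑ * ‖b j‖ₑ) p .count :=
        enorm_le_eLpNorm_count (fun x => ∑' j, ‖a (x - j)‖ₑ * ‖b j‖ₑ) x (hr.trans_le hrp).ne'
    _ ≤ eLpNorm a p .count * eLpNorm b r .count :=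
        eLpNorm_count_tsum_enorm_sub_mul_enorm_le a b hr hr1 hrp
    _ < ∞ := ENNReal.mul_lt_top ha hb

variable {R : Type*} [NonUnitalNormedRing R]

lemma eLpNorm_count_le_of_hasSum_sub_mul {a b c : G → R} (hr : 0 < r) (hr1 : r ≤ 1)
    (hrp : r ≤ p) (hc : ∀ x, HasSum (fun j => a (x - j) * b j) (c x)) :
    eLpNorm c p .count ≤ eLpNorm a p .count * eLpNorm b r .count := by
  refine le_trans (eLpNorm_mono_enorm fun x => ?_)
    (eLpNorm_count_tsum_enorm_sub_mul_enorm_le a b hr hr1 hrp)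
  rw [enorm_eq_self]
  exact (hc x).enorm_le_of_bounded ENNReal.summable.hasSum fun j =>
    enorm_mul_le_enorm_mul_enorm _ _

-- The convolution is any `c` with the right sums: in an incomplete `R` an absolutely convergent
-- series may have no sum, and `tsum` would then be the junk value `0`.
theorem stmt_1_general (a b : G → R) (hr : 0 < r) (hrp : r ≤ min 1 p)
    (ha : eLpNorm a p .count < ∞) (hb : eLpNorm b r .count < ∞) :
    (∀ x, Summable fun j => ‖a (x - j) * b j‖) ∧
      ∀ c : G → R, (∀ x, HasSum (fun j => a (x - j) * b j) (c x)) →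
        eLpNorm c p .count ≤ eLpNorm a p .count * eLpNorm b r .count := by
  obtain ⟨hr1, hrp⟩ := le_min_iff.1 hrp
  exact ⟨summable_norm_sub_mul hr hr1 hrp ha hb,
    fun _ => eLpNorm_count_le_of_hasSum_sub_mul hr hr1 hrp⟩

end Convolution

/-- Discrete Young-type inequality on `ℤ^d`: if `r ≤ min(1,p)`,
`‖a‖_{ℓ^p} < ∞` and `‖b‖_{ℓ^r} < ∞`, then the convolution
`(a*b)(x) = Σ_j a(x−j)b(j)` converges absolutely at every point and
`‖a*b‖_{ℓ^p} ≤ ‖a‖_{ℓ^p}·‖b‖_{ℓ^r}`.  The `ℓ^p` quasi-norm over `ℤ^d` is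
realized as `eLpNorm` with respect to the counting measure. -/
theorem stmt_1 (d : ℕ) (hd : 0 < d) (p r : ℝ≥0∞) (hp : 0 < p) (hr : 0 < r)
    (hrp : r ≤ min 1 p) (a b : (Fin d → ℤ) → ℂ)
    (ha : eLpNorm a p (Measure.count : Measure (Fin d → ℤ)) < ⊤)
    (hb : eLpNorm b r (Measure.count : Measure (Fin d → ℤ)) < ⊤) :
    (∀ x : Fin d → ℤ, Summable fun j => ‖a (x - j) * b j‖) ∧
      eLpNorm (fun x => ∑' j, a (x - j) * b j) p
          (Measure.count : Measure (Fin d → ℤ))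
        ≤ eLpNorm a p (Measure.count : Measure (Fin d → ℤ))
            * eLpNorm b r (Measure.count : Measure (Fin d → ℤ)) := by
  obtain ⟨summable_norm, norm_le⟩ := stmt_1_general a b hr hrp ha hb
  exact ⟨summable_norm, norm_le _ fun x => (summable_norm x).of_norm.hasSum⟩
end

section
/- Let d be a positive integer, let T : ℝ^d → ℝ^d be an invertible linear map (so that Λ = T(ℤ^d) is a full-rank lattice), let p, r ∈ (0,∞] satisfy r ≤ min(1,p), let a : ℤ^d → ℂ, and let f : ℝ^d → ℂ be measurable. Define g(x) = Σ_{k∈ℤ^d} |a(k)|·|f(x − T(k))| (a pointwise sum with values in [0,∞]). Then ‖g‖_{L^p(ℝ^d)} ≤ ‖a‖_{ℓ^r(ℤ^d)}·‖f‖_{L^p(ℝ^d)}. -/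
open MeasureTheory ENNReal

/-- The `L^p` quasi-norm of an `ℝ≥0∞`-valued function:
`(∫ g^p)^(1/p)` for `p < ∞`, and the essential supremum for `p = ∞`. -/
noncomputable def eLpNormENN {α : Type*} [MeasurableSpace α] (g : α → ℝ≥0∞)
    (p : ℝ≥0∞) (μ : Measure α) : ℝ≥0∞ :=
  if p = ⊤ then essSup g μ else (∫⁻ x, g x ^ p.toReal ∂μ) ^ (1 / p.toReal)

/-!
For `0 < r ≤ min 1 p` the quasi-norm of `L^p` satisfies the countable `r`-triangle inequality
`‖∑ Fₖ‖ₚ ^ r ≤ ∑ ‖Fₖ‖ₚ ^ r`: subadditivity of `t ↦ t ^ r` bounds the left side by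
`‖∑ Fₖ ^ r‖` in `L^(p/r)`, and since `p / r ≥ 1` Minkowski's inequality applies there. Each
translate `|a k| |f (· - T k)|` has quasi-norm `|a k| ‖f‖ₚ`, so summing `r`-th powers gives
`(‖a‖ᵣ ‖f‖ₚ) ^ r`. Treating `L^(p/r)` rather than `L^p` covers `p < 1`, `1 ≤ p < ∞` and `p = ∞`
at once.
-/

theorem iSup_rpow {ι : Sort*} (b : ι → ℝ≥0∞) {q : ℝ} (hq : 0 < q) :
    (⨆ i, b i) ^ q = ⨆ i, b i ^ q :=
  (ENNReal.orderIsoRpow q hq).map_iSup b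

theorem rpow_sum_le_sum_rpow_s2 {ι : Type*} (s : Finset ι) (b : ι → ℝ≥0∞) {q : ℝ}
    (hq : 0 < q) (hq1 : q ≤ 1) :
    (∑ i ∈ s, b i) ^ q ≤ ∑ i ∈ s, b i ^ q :=
  s.le_sum_of_subadditive (· ^ q) (ENNReal.zero_rpow_of_pos hq).le
    (fun x y => ENNReal.rpow_add_le_add_rpow x y hq.le hq1) b

theorem rpow_tsum_le_tsum_rpow_s2 {ι : Type*} (b : ι → ℝ≥0∞) {q : ℝ}
    (hq : 0 < q) (hq1 : q ≤ 1) :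
    (∑' i, b i) ^ q ≤ ∑' i, b i ^ q := by
  rw [ENNReal.tsum_eq_iSup_sum, iSup_rpow _ hq]
  exact iSup_le fun s => (rpow_sum_le_sum_rpow_s2 s b hq hq1).trans (ENNReal.sum_le_tsum s)

section Minkowski

variable {α ι : Type*} [MeasurableSpace α] {μ : Measure α} [Countable ι]

theorem essSup_iSup_le (F : ι → α → ℝ≥0∞) :
    essSup (fun x => ⨆ i, F i x) μ ≤ ⨆ i, essSup (F i) μ := by
  refine essSup_le_of_ae_le _ ?_
  filter_upwards [ae_all_iff.2 fun i => ENNReal.ae_le_essSup (F i)] with x hx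
  exact iSup_mono hx

theorem eLpNorm_iSup_le_of_directed {F : ι → α → ℝ≥0∞} (hF : ∀ i, AEMeasurable (F i) μ)
    (hdir : Directed (· ≤ ·) F) (p : ℝ≥0∞) :
    eLpNorm (fun x => ⨆ i, F i x) p μ ≤ ⨆ i, eLpNorm (F i) p μ := by
  rcases eq_or_ne p 0 with rfl | hp0
  · simp
  rcases eq_or_ne p ⊤ with rfl | hp
  · simpa only [eLpNorm_exponent_top, eLpNormEssSup, enorm_eq_self] using essSup_iSup_le F
  have hp_pos : 0 < p.toReal := ENNReal.toReal_pos hp0 hp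
  have hdir_rpow : Directed (· ≤ ·) fun i x => F i x ^ p.toReal :=
    hdir.mono_comp (g := fun G x => G x ^ p.toReal) _
      fun _ _ h x => ENNReal.rpow_le_rpow (h x) hp_pos.le
  simp only [eLpNorm_eq_lintegral_rpow_enorm_toReal hp0 hp, enorm_eq_self, iSup_rpow _ hp_pos]
  rw [lintegral_iSup_directed (fun i => (hF i).pow_const _) hdir_rpow,
    iSup_rpow _ (one_div_pos.2 hp_pos)]

theorem eLpNorm_tsum_le {F : ι → α → ℝ≥0∞} (hF : ∀ i, AEMeasurable (F i) μ) {p : ℝ≥0∞}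
    (hp : 1 ≤ p) :
    eLpNorm (fun x => ∑' i, F i x) p μ ≤ ∑' i, eLpNorm (F i) p μ := by
  have hdir : Directed (· ≤ ·) fun (s : Finset ι) x => ∑ i ∈ s, F i x :=
    Monotone.directed_le fun _ _ hst x => Finset.sum_le_sum_of_subset hst
  simp only [ENNReal.tsum_eq_iSup_sum]
  refine (eLpNorm_iSup_le_of_directed
    (fun s => Finset.aemeasurable_fun_sum s fun i _ => hF i) hdir p).trans (iSup_mono fun s => ?_)
  simpa only [Finset.sum_fn] using
    eLpNorm_sum_le (s := s) (fun i _ => (hF i).aestronglyMeasurable) hp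

theorem eLpNorm_tsum_rpow_le {F : ι → α → ℝ≥0∞} (hF : ∀ i, AEMeasurable (F i) μ) {p : ℝ≥0∞}
    {r : ℝ} (hr : 0 < r) (hr1 : r ≤ 1) (hrp : ENNReal.ofReal r ≤ p) :
    eLpNorm (fun x => ∑' i, F i x) p μ ^ r ≤ ∑' i, eLpNorm (F i) p μ ^ r := by
  have hr0 : ENNReal.ofReal r ≠ 0 := (ENNReal.ofReal_pos.2 hr).ne'
  have h_exponent : 1 ≤ p / ENNReal.ofReal r := by
    rwa [ENNReal.le_div_iff_mul_le (.inl hr0) (.inl ofReal_ne_top), one_mul]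
  have eLpNorm_rpow_eq (G : α → ℝ≥0∞) :
      eLpNorm (fun x => G x ^ r) (p / ENNReal.ofReal r) μ = eLpNorm G p μ ^ r := by
    simpa only [enorm_eq_self, ENNReal.div_mul_cancel hr0 ofReal_ne_top] using
      eLpNorm_enorm_rpow (p := p / ENNReal.ofReal r) (μ := μ) G hr
  calc eLpNorm (fun x => ∑' i, F i x) p μ ^ r
      = eLpNorm (fun x => (∑' i, F i x) ^ r) (p / ENNReal.ofReal r) μ :=
        (eLpNorm_rpow_eq _).symm
    _ ≤ eLpNorm (fun x => ∑' i, F i x ^ r) (p / ENNReal.ofReal r) μ :=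
        eLpNorm_mono_enorm fun x => rpow_tsum_le_tsum_rpow_s2 (F · x) hr hr1
    _ ≤ ∑' i, eLpNorm (fun x => F i x ^ r) (p / ENNReal.ofReal r) μ :=
        eLpNorm_tsum_le (fun i => (hF i).pow_const r) h_exponent
    _ = ∑' i, eLpNorm (F i) p μ ^ r := by simp only [eLpNorm_rpow_eq]

end Minkowski

theorem eLpNormENN_eq_eLpNorm {α : Type*} [MeasurableSpace α] (g : α → ℝ≥0∞) {p : ℝ≥0∞}
    (hp : p ≠ 0) (μ : Measure α) : eLpNormENN g p μ = eLpNorm g p μ := by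
  simp only [eLpNormENN, eLpNorm, if_neg hp, eLpNormEssSup, eLpNorm', enorm_eq_self]

theorem eLpNorm_count_rpow_toReal {ι E : Type*} [MeasurableSpace ι] [MeasurableSingletonClass ι]
    [ENorm E] (a : ι → E) {r : ℝ≥0∞} (hr : r ≠ 0) (hr_top : r ≠ ⊤) :
    eLpNorm a r Measure.count ^ r.toReal = ∑' k, ‖a k‖ₑ ^ r.toReal := by
  rw [eLpNorm_eq_lintegral_rpow_enorm_toReal hr hr_top, lintegral_count, one_div,
    ENNReal.rpow_inv_rpow (ENNReal.toReal_pos hr hr_top).ne']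

theorem stmt_2_general {α β ι E F : Type*} [MeasurableSpace α] [MeasurableSpace β]
    {μ : Measure α} {ν : Measure β} [Countable ι] [MeasurableSpace ι] [MeasurableSingletonClass ι]
    [SeminormedAddGroup E] [TopologicalSpace F] [ContinuousENorm F]
    {φ : ι → α → β} (hφ : ∀ k, MeasurePreserving (φ k) μ ν) {p r : ℝ≥0∞}
    (hr : 0 < r) (hrp : r ≤ min 1 p) (a : ι → E) {f : β → F} (hf : AEStronglyMeasurable f ν) :
    eLpNormENN (fun x => ∑' k, ‖a k‖ₑ * ‖f (φ k x)‖ₑ) p μ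
      ≤ eLpNorm a r Measure.count * eLpNorm f p ν := by
  obtain ⟨hr1, hrp⟩ := le_min_iff.1 hrp
  have hr_top : r ≠ ⊤ := ne_top_of_le_ne_top one_ne_top hr1
  have hr_pos : 0 < r.toReal := ENNReal.toReal_pos hr.ne' hr_top
  have hf_comp (k : ι) : AEStronglyMeasurable (f ∘ φ k) μ := hf.comp_measurePreserving (hφ k)
  have eLpNorm_term_le (k : ι) :
      eLpNorm (fun x => ‖a k‖ₑ * ‖f (φ k x)‖ₑ) p μ ≤ ‖a k‖ₑ * eLpNorm f p ν := by
    rw [← eLpNorm_comp_measurePreserving hf (hφ k)]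
    exact eLpNorm_le_nnreal_smul_eLpNorm_of_ae_le_mul' (c := ‖a k‖₊) (.of_forall fun _ => le_rfl) p
  rw [eLpNormENN_eq_eLpNorm _ (hr.trans_le hrp).ne', ← ENNReal.rpow_le_rpow_iff hr_pos]
  calc eLpNorm (fun x => ∑' k, ‖a k‖ₑ * ‖f (φ k x)‖ₑ) p μ ^ r.toReal
      ≤ ∑' k, eLpNorm (fun x => ‖a k‖ₑ * ‖f (φ k x)‖ₑ) p μ ^ r.toReal :=
        eLpNorm_tsum_rpow_le (fun k => (hf_comp k).enorm.const_mul _) hr_pos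
          (ENNReal.toReal_le_of_le_ofReal zero_le_one (by simpa using hr1))
          (by rwa [ENNReal.ofReal_toReal hr_top])
    _ ≤ ∑' k, (‖a k‖ₑ * eLpNorm f p ν) ^ r.toReal :=
        ENNReal.tsum_le_tsum fun k => ENNReal.rpow_le_rpow (eLpNorm_term_le k) hr_pos.le
    _ = (eLpNorm a r Measure.count * eLpNorm f p ν) ^ r.toReal := by
        simp only [ENNReal.mul_rpow_of_nonneg _ _ hr_pos.le, ENNReal.tsum_mul_right,
          eLpNorm_count_rpow_toReal a hr.ne' hr_top]

/-- Semi-discrete Young-type inequality over a full-rank lattice `Λ = T(ℤ^d)`: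
if `r ≤ min(1,p)` and `g(x) = Σ_k |a(k)|·|f(x − T(k))|`, then
`‖g‖_{L^p(ℝ^d)} ≤ ‖a‖_{ℓ^r(ℤ^d)}·‖f‖_{L^p(ℝ^d)}`. -/
theorem stmt_2 (d : ℕ) (hd : 0 < d) (T : (Fin d → ℝ) ≃ₗ[ℝ] (Fin d → ℝ))
    (p r : ℝ≥0∞) (hp : 0 < p) (hr : 0 < r) (hrp : r ≤ min 1 p)
    (a : (Fin d → ℤ) → ℂ) (f : (Fin d → ℝ) → ℂ) (hf : Measurable f)
    (g : (Fin d → ℝ) → ℝ≥0∞)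
    (hg : ∀ x, g x = ∑' k : Fin d → ℤ,
      (‖a k‖₊ : ℝ≥0∞) * (‖f (x - T (fun i => (k i : ℝ)))‖₊ : ℝ≥0∞)) :
    eLpNormENN g p volume
      ≤ eLpNorm a r (Measure.count : Measure (Fin d → ℤ)) * eLpNorm f p volume := by
  have hT (k : Fin d → ℤ) : MeasurePreserving (fun x => x - T fun i => (k i : ℝ)) :=
    measurePreserving_sub_right volume _
  simpa only [funext hg, enorm_eq_nnnorm] using stmt_2_general hT hr hrp a hf.aestronglyMeasurable
end
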